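/- For a ring R the following are equivalent: (1) R is weakly quasi-Frobenius; (2) R is a left and right IF-ring; (3) R is left coherent and left FP-injective, and every cyclic finitely presented left R-module embeds in a free left R-module; (4) every FP-injective left R-module and every FP-injective right R-module is flat; (5) every injective left R-module and every injective right R-module is flat. -/

import Mathlib

/-!
Common definitions: rings are associative with identity, not necessarily commutative.
Left `R`-modules are `Module R M`; right `R`-modules are `Module Rᵐᵒᵖ M`.
-/

universe u

open MulOpposite Function Pointwise

section Defs

variable (R : Type u) [Ring R]

/-- Defining relations of the tensor product `K ⊗_R M` of a right `R`-module `K`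
and a left `R`-module `M`, inside the free abelian group on `K × M`. -/
def TensorRels (K M : Type u) [AddCommGroup K] [Module Rᵐᵒᵖ K]
    [AddCommGroup M] [Module R M] : AddSubgroup (FreeAbelianGroup (K × M)) :=
  AddSubgroup.closure
    ({x | ∃ k₁ k₂ m, x = FreeAbelianGroup.of (k₁ + k₂, m) - FreeAbelianGroup.of (k₁, m) -
        FreeAbelianGroup.of (k₂, m)} ∪
     {x | ∃ k m₁ m₂, x = FreeAbelianGroup.of (k, m₁ + m₂) - FreeAbelianGroup.of (k, m₁) -
        FreeAbelianGroup.of (k, m₂)} ∪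
     {x | ∃ (r : R) (k : K) (m : M),
        x = FreeAbelianGroup.of (op r • k, m) - FreeAbelianGroup.of (k, r • m)})

/-- The tensor product `K ⊗_R M` of a right `R`-module `K` and a left `R`-module `M`
over the (not necessarily commutative) ring `R`, as an abelian group. -/
def NCTensor (K M : Type u) [AddCommGroup K] [Module Rᵐᵒᵖ K]
    [AddCommGroup M] [Module R M] : Type u :=
  FreeAbelianGroup (K × M) ⧸ TensorRels R K M

instance (K M : Type u) [AddCommGroup K] [Module Rᵐᵒᵖ K] [AddCommGroup M] [Module R M] :
    AddCommGroup (NCTensor R K M) :=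
  QuotientAddGroup.Quotient.addCommGroup _

/-- The map `μ ⊗ ν : K ⊗_R M → K' ⊗_R M'` induced by a map `μ` of right `R`-modules
and a map `ν` of left `R`-modules. -/
def tensorCongr {K K' M M' : Type u} [AddCommGroup K] [Module Rᵐᵒᵖ K]
    [AddCommGroup K'] [Module Rᵐᵒᵖ K'] [AddCommGroup M] [Module R M]
    [AddCommGroup M'] [Module R M'] (μ : K →ₗ[Rᵐᵒᵖ] K') (ν : M →ₗ[R] M') :
    NCTensor R K M →+ NCTensor R K' M' :=
  QuotientAddGroup.map (TensorRels R K M) (TensorRels R K' M')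
    (FreeAbelianGroup.lift fun p : K × M => FreeAbelianGroup.of (μ p.1, ν p.2))
    (by
      refine (AddSubgroup.closure_le _).2 ?_
      rintro x ((⟨k₁, k₂, m, rfl⟩ | ⟨k, m₁, m₂, rfl⟩) | ⟨r, k, m, rfl⟩) <;>
        refine AddSubgroup.mem_comap.2 (AddSubgroup.subset_closure ?_)
      · exact Or.inl <| Or.inl ⟨μ k₁, μ k₂, ν m, by simp [map_add]⟩
      · exact Or.inl <| Or.inr ⟨μ k, ν m₁, ν m₂, by simp [map_add]⟩
      · exact Or.inr ⟨r, μ k, ν m, by simp [map_smul]⟩)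

/-- A left `R`-module `M` is flat if `μ ⊗ M` is injective for every injective
homomorphism `μ` of right `R`-modules. -/
def ModFlat (M : Type u) [AddCommGroup M] [Module R M] : Prop :=
  ∀ (K L : Type u) [AddCommGroup K] [Module Rᵐᵒᵖ K] [AddCommGroup L] [Module Rᵐᵒᵖ L]
    (μ : K →ₗ[Rᵐᵒᵖ] L), Injective μ →
      Injective (tensorCongr R μ (LinearMap.id : M →ₗ[R] M))

/-- A right `R`-module `M` is flat if `M ⊗ μ` is injective for every injective
homomorphism `μ` of left `R`-modules. -/
def ModFlatRight (M : Type u) [AddCommGroup M] [Module Rᵐᵒᵖ M] : Prop :=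
  ∀ (K L : Type u) [AddCommGroup K] [Module R K] [AddCommGroup L] [Module R L]
    (μ : K →ₗ[R] L), Injective μ →
      Injective (tensorCongr R (LinearMap.id : M →ₗ[Rᵐᵒᵖ] M) μ)

/-- A left `R`-module `M` is fp-flat if `μ ⊗ M` is injective for every injective
homomorphism `μ` of finitely presented right `R`-modules. -/
def FpFlat (M : Type u) [AddCommGroup M] [Module R M] : Prop :=
  ∀ (K L : Type u) [AddCommGroup K] [Module Rᵐᵒᵖ K] [AddCommGroup L] [Module Rᵐᵒᵖ L],
    Module.FinitePresentation Rᵐᵒᵖ K → Module.FinitePresentation Rᵐᵒᵖ L →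
    ∀ (μ : K →ₗ[Rᵐᵒᵖ] L), Injective μ →
      Injective (tensorCongr R μ (LinearMap.id : M →ₗ[R] M))

/-- A right `R`-module `M` is fp-flat if `M ⊗ μ` is injective for every injective
homomorphism `μ` of finitely presented left `R`-modules. -/
def FpFlatRight (M : Type u) [AddCommGroup M] [Module Rᵐᵒᵖ M] : Prop :=
  ∀ (K L : Type u) [AddCommGroup K] [Module R K] [AddCommGroup L] [Module R L],
    Module.FinitePresentation R K → Module.FinitePresentation R L →
    ∀ (μ : K →ₗ[R] L), Injective μ →
      Injective (tensorCongr R (LinearMap.id : M →ₗ[Rᵐᵒᵖ] M) μ)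

/-- `Ext¹_R(F, M) = 0`. -/
def ExtVanish (F M : Type u) [AddCommGroup F] [Module R F] [AddCommGroup M] [Module R M] :
    Prop :=
  Subsingleton
    (((Ext ℤ (ModuleCat.{u} R) 1).obj (Opposite.op (ModuleCat.of R F))).obj (ModuleCat.of R M))

/-- A left `R`-module `M` is FP-injective (absolutely pure) if `Ext¹_R(F, M) = 0` for
every finitely presented left `R`-module `F`. -/
def FPInjective (M : Type u) [AddCommGroup M] [Module R M] : Prop :=
  ∀ (F : Type u) [AddCommGroup F] [Module R F], Module.FinitePresentation R F → ExtVanish R F M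

/-- A left `R`-module `M` is fp-injective if for every injective homomorphism `μ : K → L`
of finitely presented left `R`-modules, the induced map `Hom(L, M) → Hom(K, M)` is
surjective. -/
def FpInjective (M : Type u) [AddCommGroup M] [Module R M] : Prop :=
  ∀ (K L : Type u) [AddCommGroup K] [Module R K] [AddCommGroup L] [Module R L],
    Module.FinitePresentation R K → Module.FinitePresentation R L →
    ∀ (μ : K →ₗ[R] L), Injective μ → ∀ f : K →ₗ[R] M, ∃ g : L →ₗ[R] M, g ∘ₗ μ = f

/-- A left `R`-module `K` is an FP-cogenerator if for every nonzero homomorphism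
`f : M → N` from a finitely generated module `M` to a finitely presented module `N`
there is `g : N → K` with `g ∘ f ≠ 0`. -/
def IsFPCogenerator (K : Type u) [AddCommGroup K] [Module R K] : Prop :=
  ∀ (M N : Type u) [AddCommGroup M] [Module R M] [AddCommGroup N] [Module R N],
    Module.Finite R M → Module.FinitePresentation R N →
    ∀ f : M →ₗ[R] N, f ≠ 0 → ∃ g : N →ₗ[R] K, g ∘ₗ f ≠ 0

/-- A left `R`-module `K` is a cogenerator if for every nonzero homomorphism `f : M → N`
of left `R`-modules there is `g : N → K` with `g ∘ f ≠ 0`. -/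
def IsCogenerator (K : Type u) [AddCommGroup K] [Module R K] : Prop :=
  ∀ (M N : Type u) [AddCommGroup M] [Module R M] [AddCommGroup N] [Module R N],
    ∀ f : M →ₗ[R] N, f ≠ 0 → ∃ g : N →ₗ[R] K, g ∘ₗ f ≠ 0

/-- The canonical evaluation map `M → M** = Hom(Hom(M, R), R)` for a left `R`-module `M`;
here `M* = Hom_R(M, R)` is a right `R`-module. -/
def dualEval (M : Type u) [AddCommGroup M] [Module R M] :
    M →ₗ[R] ((M →ₗ[R] R) →ₗ[Rᵐᵒᵖ] R) where
  toFun m :=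
    { toFun := fun f => f m
      map_add' := fun f g => rfl
      map_smul' := fun r f => rfl }
  map_add' m m' := LinearMap.ext fun f => f.map_add m m'
  map_smul' r m := LinearMap.ext fun f => by simp [f.map_smul]

/-- The canonical evaluation map `M → M** = Hom(Hom(M, R), R)` for a right `R`-module `M`;
here `M* = Hom_R(M, R)` is a left `R`-module. -/
def dualEvalRight (M : Type u) [AddCommGroup M] [Module Rᵐᵒᵖ M] :
    M →ₗ[Rᵐᵒᵖ] ((M →ₗ[Rᵐᵒᵖ] R) →ₗ[R] R) where
  toFun m :=
    { toFun := fun f => f m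
      map_add' := fun f g => rfl
      map_smul' := fun r f => rfl }
  map_add' m m' := LinearMap.ext fun f => f.map_add m m'
  map_smul' r m := LinearMap.ext fun f => by simp [f.map_smul]

/-- The left annihilator of a subset `X ⊆ R`. -/
def lAnn (X : Set R) : Set R := {a | ∀ x ∈ X, a * x = 0}

/-- The right annihilator of a subset `X ⊆ R`. -/
def rAnn (X : Set R) : Set R := {a | ∀ x ∈ X, x * a = 0}

/-- `R` is left coherent: every finitely generated left ideal is finitely presented. -/
def LeftCoherent : Prop :=
  ∀ I : Submodule R R, I.FG → Module.FinitePresentation R I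

/-- `R` is right coherent: every finitely generated right ideal is finitely presented. -/
def RightCoherent : Prop :=
  ∀ I : Submodule Rᵐᵒᵖ R, I.FG → Module.FinitePresentation Rᵐᵒᵖ I

/-- A left `R`-module `M` embeds in a free left `R`-module. -/
def EmbedsInFree (M : Type u) [AddCommGroup M] [Module R M] : Prop :=
  ∃ (ι : Type u) (f : M →ₗ[R] (ι →₀ R)), Injective f

/-- A right `R`-module `M` embeds in a free right `R`-module. -/
def EmbedsInFreeRight (M : Type u) [AddCommGroup M] [Module Rᵐᵒᵖ M] : Prop :=
  ∃ (ι : Type u) (f : M →ₗ[Rᵐᵒᵖ] (ι →₀ R)), Injective f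

/-- `R` is a left IF-ring: every finitely presented left `R`-module embeds in a free module. -/
def LeftIF : Prop :=
  ∀ (M : Type u) [AddCommGroup M] [Module R M],
    Module.FinitePresentation R M → EmbedsInFree R M

/-- `R` is a right IF-ring: every finitely presented right `R`-module embeds in a free module. -/
def RightIF : Prop :=
  ∀ (M : Type u) [AddCommGroup M] [Module Rᵐᵒᵖ M],
    Module.FinitePresentation Rᵐᵒᵖ M → EmbedsInFreeRight R M

/-- A module is cyclic if it is generated by one element. -/
def CyclicModule (M : Type u) [AddCommGroup M] [Module R M] : Prop :=
  ∃ m : M, Submodule.span R {m} = ⊤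

/-- `R` is a left CF-ring: every cyclic left `R`-module embeds in a free module. -/
def LeftCF : Prop :=
  ∀ (M : Type u) [AddCommGroup M] [Module R M], CyclicModule R M → EmbedsInFree R M

/-- `R` is a left FGF-ring: every finitely generated left `R`-module embeds in a free module. -/
def LeftFGF : Prop :=
  ∀ (M : Type u) [AddCommGroup M] [Module R M], Module.Finite R M → EmbedsInFree R M

/-- `R` is a left Kasch ring: `Hom_R(M, R) ≠ 0` for every nonzero cyclic left `R`-module. -/
def LeftKasch : Prop :=
  ∀ (M : Type u) [AddCommGroup M] [Module R M],
    CyclicModule R M → Nontrivial M → ∃ f : M →ₗ[R] R, f ≠ 0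

/-- `R` is a right Kasch ring: `Hom_R(M, R) ≠ 0` for every nonzero cyclic right `R`-module. -/
def RightKasch : Prop :=
  ∀ (M : Type u) [AddCommGroup M] [Module Rᵐᵒᵖ M],
    CyclicModule Rᵐᵒᵖ M → Nontrivial M → ∃ f : M →ₗ[Rᵐᵒᵖ] R, f ≠ 0

/-- The socle of a module: the sum of all its simple submodules. -/
def socle (M : Type u) [AddCommGroup M] [Module R M] : Submodule R M :=
  sSup {N : Submodule R M | IsSimpleModule R N}

/-- `R` is left semiartinian: every nonzero cyclic left `R`-module has a nonzero socle. -/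
def LeftSemiartinian : Prop :=
  ∀ (M : Type u) [AddCommGroup M] [Module R M],
    CyclicModule R M → Nontrivial M → socle R M ≠ ⊥

/-- A submodule `N ⊆ M` is essential if it meets every nonzero submodule nontrivially. -/
def EssentialSub {M : Type u} [AddCommGroup M] [Module R M] (N : Submodule R M) : Prop :=
  ∀ P : Submodule R M, P ≠ ⊥ → N ⊓ P ≠ ⊥

/-- `R` is semiregular: `R/rad R` is von Neumann regular,
where `rad R` is the Jacobson radical. -/
def Semiregular : Prop :=
  ∀ a : R, ∃ x : R, a - a * x * a ∈ Ideal.jacobson (⊥ : Ideal R)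

/-- `R` is semiperfect: `R/rad R` is semisimple and idempotents lift modulo `rad R`. -/
def Semiperfect : Prop :=
  IsSemisimpleModule R (R ⧸ Ideal.jacobson (⊥ : Ideal R)) ∧
    ∀ a : R, a * a - a ∈ Ideal.jacobson (⊥ : Ideal R) →
      ∃ e : R, e * e = e ∧ e - a ∈ Ideal.jacobson (⊥ : Ideal R)

/-- A module is indecomposable if it is nonzero and is not the direct sum of two
nonzero submodules. -/
def IndecModule (M : Type u) [AddCommGroup M] [Module R M] : Prop :=
  Nontrivial M ∧ ∀ A B : Submodule R M, IsCompl A B → A = ⊥ ∨ B = ⊥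

/-- `R` is weakly quasi-Frobenius: left and right coherent and left and right FP-injective. -/
def WQF : Prop :=
  LeftCoherent R ∧ RightCoherent R ∧ FPInjective R R ∧ FPInjective Rᵐᵒᵖ R

/-- `R` is quasi-Frobenius: left and right noetherian and left and right self-injective. -/
def QF : Prop :=
  IsNoetherianRing R ∧ IsNoetherian Rᵐᵒᵖ R ∧ Module.Injective R R ∧ Module.Injective Rᵐᵒᵖ R

end Defs

/-- A group is locally finite if every finitely generated subgroup is finite. -/
def LocallyFiniteGroup (G : Type*) [Group G] : Prop :=
  ∀ H : Subgroup G, H.FG → Finite H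

/-!
A map `d` between finite free left modules is a matrix, and the quotient by its range embeds in a
free module exactly when `d` is the left half of an exact pair of matrices. One-sided
FP-injectivity of `R` turns exactness of a pair for row vectors into exactness for column vectors,
so coherence on one side and the IF property on the other are the same condition. The IF property
reduces to cyclic modules by induction on the number of generators: over a left coherent ring the
submodule generated by the first generator is finitely presented, and FP-injectivity of `R` extends
its embedding to the whole module.

A module is flat if and only if its character module is injective, if and only if every relation
`f ∘ d = 0` with `d` between finite free modules factors as `f = h ∘ e` with `e ∘ d = 0`. If `R` is
left IF, then `e` with `ker e = range d` exists and FP-injectivity of the module gives `h`.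
Conversely, embedding `Rⁿ ⧸ range d` in an injective, hence flat, module `E` and factoring `Rⁿ → E`
as `h ∘ e` forces `ker e = range d`.
-/

section HomExtends

variable {R P Q F M X Y : Type*} [Ring R] [AddCommGroup P] [Module R P] [AddCommGroup Q]
  [Module R Q] [AddCommGroup F] [Module R F] [AddCommGroup M] [Module R M] [AddCommGroup X]
  [Module R X] [AddCommGroup Y] [Module R Y]

theorem exists_comp_eq_of_ker_le {p : P →ₗ[R] F} (hp : Surjective p) {f : P →ₗ[R] M}
    (h : LinearMap.ker p ≤ LinearMap.ker f) : ∃ g : F →ₗ[R] M, g ∘ₗ p = f := by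
  refine ⟨(LinearMap.ker p).liftQ f h ∘ₗ (p.quotKerEquivOfSurjective hp).symm, ?_⟩
  ext x
  have : (p.quotKerEquivOfSurjective hp).symm (p x) = Submodule.Quotient.mk x :=
    (LinearEquiv.symm_apply_eq _).2 rfl
  simp [this]

/-- Every homomorphism from the submodule `N ≤ P` to `M` extends to `P`. When `P` is projective
this says that `Ext¹(P ⧸ N, M) = 0`. -/
def HomExtends (N : Submodule R P) (M : Type*) [AddCommGroup M] [Module R M] : Prop :=
  ∀ f : N →ₗ[R] M, ∃ g : P →ₗ[R] M, g ∘ₗ N.subtype = f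

theorem homExtends_range_iff (d : Y →ₗ[R] X) :
    HomExtends (LinearMap.range d) M ↔
      ∀ f : Y →ₗ[R] M, LinearMap.ker d ≤ LinearMap.ker f → ∃ g : X →ₗ[R] M, g ∘ₗ d = f := by
  constructor
  · intro h f hf
    obtain ⟨f', rfl⟩ := exists_comp_eq_of_ker_le d.surjective_rangeRestrict
      (d.ker_rangeRestrict.trans_le hf)
    obtain ⟨g, rfl⟩ := h f'
    exact ⟨g, rfl⟩
  · intro h f
    obtain ⟨g, hg⟩ := h (f ∘ₗ d.rangeRestrict)
      (d.ker_rangeRestrict.symm.trans_le (LinearMap.ker_le_ker_comp _ _))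
    exact ⟨g, (LinearMap.cancel_right d.surjective_rangeRestrict).1 hg⟩

theorem HomExtends.of_projective [Module.Projective R Q] {q : Q →ₗ[R] F}
    (hq : HomExtends (LinearMap.ker q) M) (hqs : Surjective q) {p : P →ₗ[R] F}
    (hp : Surjective p) : HomExtends (LinearMap.ker p) M := by
  intro f
  obtain ⟨a, rfl⟩ := Module.projective_lifting_property p q hp
  obtain ⟨g, hg⟩ := hq (f ∘ₗ a.restrict fun x hx => hx)
  have hsurj : Surjective (a.coprod (LinearMap.ker p).subtype) := by
    intro x
    obtain ⟨y, hy⟩ := hqs (p x)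
    exact ⟨(y, ⟨x - a y, by simpa [sub_eq_zero] using hy.symm⟩), by simp⟩
  obtain ⟨g', hg'⟩ := exists_comp_eq_of_ker_le hsurj (f := g.coprod f) (by
    rintro ⟨y, z, hz⟩ hyz
    have haz : a y = -z := eq_neg_of_add_eq_zero_left hyz
    have hy : y ∈ LinearMap.ker (p ∘ₗ a) := by simpa [haz] using hz
    have hay : a.restrict (q := LinearMap.ker p) (fun x hx => hx) ⟨y, hy⟩ = -⟨z, hz⟩ :=
      Subtype.ext haz
    have hgy : g y = f (a.restrict (fun x hx => hx) ⟨y, hy⟩) := LinearMap.congr_fun hg ⟨y, hy⟩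
    simp [hgy, hay])
  refine ⟨g', LinearMap.ext fun z => ?_⟩
  simpa using LinearMap.congr_fun hg' (0, z)

theorem exists_comp_eq_of_baer (hM : Module.Baer R M) (d : Y →ₗ[R] X) {f : Y →ₗ[R] M}
    (hf : LinearMap.ker d ≤ LinearMap.ker f) : ∃ g : X →ₗ[R] M, g ∘ₗ d = f :=
  (homExtends_range_iff d).1
    (hM.extension_property (LinearMap.range d).subtype Subtype.val_injective) f hf

end HomExtends

section Ext

open CategoryTheory

variable {R : Type u} [Ring R] {F M : Type u} [AddCommGroup F] [Module R F] [AddCommGroup M]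
  [Module R M]

theorem extVanish_iff_homExtends_range (Pr : ProjectiveResolution (ModuleCat.of R F)) :
    ExtVanish R F M ↔ HomExtends (LinearMap.range (Pr.complex.d 1 0).hom) M := by
  have hrange : LinearMap.range (Pr.complex.d 2 1).hom = LinearMap.ker (Pr.complex.d 1 0).hom :=
    (Pr.exact_succ 0).moduleCat_range_eq_ker
  unfold ExtVanish
  rw [(Pr.isoExt (R := ℤ) 1 (ModuleCat.of R M)).toLinearEquiv.toEquiv.subsingleton_congr,
    ← ModuleCat.isZero_iff_subsingleton, ← HomologicalComplex.exactAt_iff_isZero_homology,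
    HomologicalComplex.exactAt_iff' _ 0 1 2 (by simp) (by simp),
    ShortComplex.moduleCat_exact_iff, homExtends_range_iff, ← hrange]
  refine ⟨fun h f hf => ?_, fun h f hf => ?_⟩
  · obtain ⟨g, hg⟩ := h (ModuleCat.ofHom f) (ModuleCat.hom_ext (LinearMap.range_le_ker_iff.1 hf))
    exact ⟨g.hom, congrArg ModuleCat.Hom.hom hg⟩
  · obtain ⟨g, hg⟩ := h f.hom
      (LinearMap.range_le_ker_iff.2 (congrArg ModuleCat.Hom.hom hf))
    exact ⟨ModuleCat.ofHom g, ModuleCat.hom_ext hg⟩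

theorem extVanish_iff_homExtends {P : Type u} [AddCommGroup P] [Module R P] [Module.Projective R P]
    {p : P →ₗ[R] F} (hp : Surjective p) :
    ExtVanish R F M ↔ HomExtends (LinearMap.ker p) M := by
  let Pr := projectiveResolution (ModuleCat.of R F)
  let q : Pr.complex.X 0 →ₗ[R] F := (Pr.π.f 0).hom
  have hq : Surjective q := (ModuleCat.epi_iff_surjective _).1 inferInstance
  have : Module.Projective R (Pr.complex.X 0) :=
    (IsProjective.iff_projective (R := R) (Pr.complex.X 0)).2 (Pr.projective 0)
  have hrange : LinearMap.range (Pr.complex.d 1 0).hom = LinearMap.ker q :=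
    (ShortComplex.exact_of_g_is_cokernel (ShortComplex.mk _ _ Pr.complex_d_comp_π_f_zero)
      Pr.isColimitCokernelCofork).moduleCat_range_eq_ker
  rw [extVanish_iff_homExtends_range Pr, hrange]
  exact ⟨fun h => h.of_projective hq hp, fun h => h.of_projective hp hq⟩

end Ext

section FPInjective

variable {R : Type u} [Ring R] {M : Type u} [AddCommGroup M] [Module R M]

theorem finitePresentation_quotient_range {X Y : Type*} [AddCommGroup X] [Module R X]
    [AddCommGroup Y] [Module R Y] [Module.FinitePresentation R X] [Module.Finite R Y]
    (d : Y →ₗ[R] X) : Module.FinitePresentation R (X ⧸ LinearMap.range d) :=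
  Module.finitePresentation_of_surjective _ (Submodule.mkQ_surjective _)
    (by simpa only [Submodule.ker_mkQ] using Submodule.fg_range d)

theorem FPInjective.exists_comp_eq (hM : FPInjective R M) {X : Type u} {Y : Type*}
    [AddCommGroup X] [Module R X] [AddCommGroup Y] [Module R Y] (j : Y →ₗ[R] X)
    (hj : Module.FinitePresentation R (X ⧸ LinearMap.range j)) {f : Y →ₗ[R] M}
    (hf : LinearMap.ker j ≤ LinearMap.ker f) : ∃ g : X →ₗ[R] M, g ∘ₗ j = f := by
  obtain ⟨n, q, hq⟩ := Module.Finite.exists_fin' R (X ⧸ LinearMap.range j)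
  have hext := ((extVanish_iff_homExtends hq).1 (hM _ hj)).of_projective hq
    (LinearMap.range j).mkQ_surjective
  rw [Submodule.ker_mkQ] at hext
  exact (homExtends_range_iff j).1 hext f hf

theorem fpInjective_iff :
    FPInjective R M ↔ ∀ (m n : ℕ) (d : (Fin m → R) →ₗ[R] Fin n → R) (f : (Fin m → R) →ₗ[R] M),
      LinearMap.ker d ≤ LinearMap.ker f → ∃ g : (Fin n → R) →ₗ[R] M, g ∘ₗ d = f := by
  constructor
  · exact fun hM m n d f hf => hM.exists_comp_eq d (finitePresentation_quotient_range d) hf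
  · intro h F _ _ hF
    obtain ⟨n, m, q, d, hq, hdq⟩ := Module.FinitePresentation.exists_fin' R F
    rw [extVanish_iff_homExtends hq, hdq.linearMap_ker_eq, homExtends_range_iff]
    exact h m n d

theorem FPInjective.of_injective (hM : Module.Injective R M) : FPInjective R M :=
  fpInjective_iff.2 fun _ _ d _ => exists_comp_eq_of_baer (.of_injective hM) d

theorem FPInjective.of_linearEquiv {N : Type u} [AddCommGroup N] [Module R N]
    (hM : FPInjective R M) (e : M ≃ₗ[R] N) : FPInjective R N :=
  fpInjective_iff.2 fun m n d f hf => by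
    obtain ⟨g, hg⟩ := fpInjective_iff.1 hM m n d (e.symm ∘ₗ f)
      (hf.trans (LinearMap.ker_le_ker_comp _ _))
    exact ⟨e ∘ₗ g, by simp [LinearMap.comp_assoc, hg, ← LinearMap.comp_assoc f]⟩

theorem FPInjective.pi {ι : Type} {N : ι → Type u} [∀ i, AddCommGroup (N i)]
    [∀ i, Module R (N i)] (hN : ∀ i, FPInjective R (N i)) : FPInjective R (∀ i, N i) :=
  fpInjective_iff.2 fun m n d f hf => by
    choose g hg using fun i => fpInjective_iff.1 (hN i) m n d (LinearMap.proj i ∘ₗ f)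
      (hf.trans (LinearMap.ker_le_ker_comp _ _))
    exact ⟨LinearMap.pi g, LinearMap.ext fun x => funext fun i => LinearMap.congr_fun (hg i) x⟩

end FPInjective

section EmbedsInFree

theorem exists_finset_range_le_supported {R M ι : Type*} [Ring R] [AddCommGroup M] [Module R M]
    [Module.Finite R M] (f : M →ₗ[R] ι →₀ R) :
    ∃ S : Finset ι, LinearMap.range f ≤ Finsupp.supported R R (S : Set ι) := by
  classical
  obtain ⟨s, hs⟩ := Submodule.fg_range f
  refine ⟨s.biUnion Finsupp.support, ?_⟩
  rw [← hs, Submodule.span_le]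
  intro x hx
  simpa only [SetLike.mem_coe, Finsupp.mem_supported, Finset.coe_subset] using
    Finset.subset_biUnion_of_mem _ hx

variable {R : Type u} [Ring R] {M : Type u} [AddCommGroup M] [Module R M]

theorem EmbedsInFree.of_injective_pi {ι : Type} [Finite ι] {f : M →ₗ[R] ι → R}
    (hf : Injective f) : EmbedsInFree R M := by
  let e := LinearEquiv.funCongrLeft R R (Equiv.ulift.{u} (α := ι)) ≪≫ₗ
    (Finsupp.linearEquivFunOnFinite R R (ULift.{u} ι)).symm
  exact ⟨ULift ι, e.toLinearMap ∘ₗ f, e.injective.comp hf⟩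

theorem embedsInFree_iff_exists_fin [Module.Finite R M] :
    EmbedsInFree R M ↔ ∃ (p : ℕ) (f : M →ₗ[R] Fin p → R), Injective f := by
  constructor
  · rintro ⟨ι, f, hf⟩
    obtain ⟨S, hS⟩ := exists_finset_range_le_supported f
    let f' := f.codRestrict (Finsupp.supported R R (S : Set ι)) fun x => hS ⟨x, rfl⟩
    let e := Finsupp.supportedEquivFinsupp (M := R) (R := R) (S : Set ι) ≪≫ₗ
      Finsupp.linearEquivFunOnFinite R R S ≪≫ₗ LinearEquiv.funCongrLeft R R S.equivFin.symm
    exact ⟨S.card, e.toLinearMap ∘ₗ f', e.injective.comp (hf.codRestrict _)⟩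
  · rintro ⟨p, f, hf⟩
    exact .of_injective_pi hf

theorem leftIF_iff_exact :
    LeftIF R ↔ ∀ (m n : ℕ) (d : (Fin m → R) →ₗ[R] Fin n → R),
      ∃ (p : ℕ) (e : (Fin n → R) →ₗ[R] Fin p → R), Exact d e := by
  constructor
  · intro h m n d
    obtain ⟨p, f, hf⟩ := embedsInFree_iff_exists_fin.1 (h _ (finitePresentation_quotient_range d))
    refine ⟨p, f ∘ₗ (LinearMap.range d).mkQ, LinearMap.exact_iff.2 ?_⟩
    rw [LinearMap.ker_comp_of_ker_eq_bot _ (LinearMap.ker_eq_bot.2 hf), Submodule.ker_mkQ]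
  · intro h M _ _ hM
    obtain ⟨n, m, q, d, hq, hdq⟩ := Module.FinitePresentation.exists_fin' R M
    obtain ⟨p, e, hde⟩ := h m n d
    have hker : LinearMap.ker q = LinearMap.ker e :=
      hdq.linearMap_ker_eq.trans hde.linearMap_ker_eq.symm
    obtain ⟨f, rfl⟩ := exists_comp_eq_of_ker_le hq hker.le
    refine embedsInFree_iff_exists_fin.2 ⟨p, f, (injective_iff_map_eq_zero f).2 fun x hx => ?_⟩
    obtain ⟨y, rfl⟩ := hq x
    exact hker.ge hx

end EmbedsInFree

section Coherent

variable {R M N : Type*} [Ring R] [AddCommGroup M] [Module R M] [AddCommGroup N] [Module R N]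

/-- A module whose finitely generated submodules are finitely presented: a pseudo-coherent module
in the sense of Bourbaki. `LeftCoherent R` is `PseudoCoherent R R`. -/
def PseudoCoherent (R M : Type*) [Ring R] [AddCommGroup M] [Module R M] : Prop :=
  ∀ K : Submodule R M, K.FG → Module.FinitePresentation R K

theorem PseudoCoherent.of_injective (hN : PseudoCoherent R N) {f : M →ₗ[R] N}
    (hf : Injective f) : PseudoCoherent R M := by
  intro K hK
  have := hN _ (hK.map f)
  exact .of_equiv (Submodule.equivMapOfInjective f hf K).symm

theorem PseudoCoherent.finitePresentation [Module.Finite R M] (hM : PseudoCoherent R M) :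
    Module.FinitePresentation R M := by
  have := hM ⊤ Module.Finite.fg_top
  exact .of_equiv Submodule.topEquiv

theorem PseudoCoherent.prod (hM : PseudoCoherent R M) (hN : PseudoCoherent R N) :
    PseudoCoherent R (M × N) := by
  intro K hK
  have : Module.Finite R K := .of_fg hK
  let f : K →ₗ[R] N := LinearMap.snd R M N ∘ₗ K.subtype
  have := hN (LinearMap.range f) (Submodule.fg_range f)
  have hker : (LinearMap.ker f.rangeRestrict).FG :=
    Module.FinitePresentation.fg_ker _ f.surjective_rangeRestrict
  have hinj : Injective ((LinearMap.fst R M N ∘ₗ K.subtype).domRestrict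
      (LinearMap.ker f.rangeRestrict)) := fun x y hxy =>
    Subtype.ext <| Subtype.ext <| Prod.ext hxy <|
      (congrArg Subtype.val x.2).trans (congrArg Subtype.val y.2).symm
  have : Module.Finite R (LinearMap.ker f.rangeRestrict) := .of_fg hker
  have := (hM.of_injective (M := LinearMap.ker f.rangeRestrict) hinj).finitePresentation
  exact Module.finitePresentation_of_ker f.rangeRestrict f.surjective_rangeRestrict

theorem PseudoCoherent.pi (hM : PseudoCoherent R M) (n : ℕ) : PseudoCoherent R (Fin n → M) := by
  induction n with
  | zero =>
    intro K _
    infer_instance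
  | succ n ih => exact (hM.prod ih).of_injective (Fin.consLinearEquiv R fun _ => M).symm.injective

theorem PseudoCoherent.of_surjective (hM : PseudoCoherent R M) {f : M →ₗ[R] N}
    (hf : Surjective f) (hker : (LinearMap.ker f).FG) : PseudoCoherent R N := by
  intro K hK
  have hcomap : (K.comap f).FG := by
    apply Submodule.fg_of_fg_map_of_fg_inf_ker f
    · rwa [Submodule.map_comap_eq_of_surjective hf]
    · rwa [inf_eq_right.2 (LinearMap.ker_le_comap f)]
  have := hM _ hcomap
  refine Module.finitePresentation_of_surjective (f.restrict (p := K.comap f) (q := K) fun _ => id)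
    (fun y => ?_) ?_
  · obtain ⟨x, hx⟩ := hf y
    exact ⟨⟨x, show f x ∈ K from hx ▸ y.2⟩, Subtype.ext hx⟩
  · rw [← Submodule.fg_map_iff (K.comap f).subtype Subtype.val_injective]
    have hmap : (LinearMap.ker (f.restrict (p := K.comap f) (q := K) fun _ => id)).map
        (K.comap f).subtype = LinearMap.ker f := by
      ext x
      simp +contextual [Subtype.ext_iff]
    rwa [hmap]

theorem LeftCoherent.pseudoCoherent {R M : Type*} [Ring R] [AddCommGroup M] [Module R M]
    (hR : LeftCoherent R) [Module.FinitePresentation R M] : PseudoCoherent R M := by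
  obtain ⟨n, q, hq⟩ := Module.Finite.exists_fin' R M
  exact (PseudoCoherent.pi hR n).of_surjective hq (Module.FinitePresentation.fg_ker q hq)

theorem leftCoherent_iff_exact {R : Type u} [Ring R] :
    LeftCoherent R ↔ ∀ (n p : ℕ) (e : (Fin n → R) →ₗ[R] Fin p → R),
      ∃ (m : ℕ) (d : (Fin m → R) →ₗ[R] Fin n → R), Exact d e := by
  constructor
  · intro h n p e
    have := h.pseudoCoherent _ (Submodule.fg_range e)
    obtain ⟨m, d, hd⟩ := (Submodule.fg_iff_exists_fin_linearMap R _).1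
      (Module.FinitePresentation.fg_ker e.rangeRestrict e.surjective_rangeRestrict)
    exact ⟨m, d, LinearMap.exact_iff.2 (by rw [hd, LinearMap.ker_rangeRestrict])⟩
  · intro h I hI
    have : Module.Finite R I := .of_fg hI
    obtain ⟨n, q, hq⟩ := Module.Finite.exists_fin' R I
    let e := (LinearEquiv.funUnique (Fin 1) R R).symm.toLinearMap ∘ₗ I.subtype ∘ₗ q
    obtain ⟨m, d, hd⟩ := h n 1 e
    have hker : LinearMap.ker q = LinearMap.range d := by
      rw [← hd.linearMap_ker_eq]
      ext x
      simp [e]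
    exact Module.finitePresentation_of_surjective q hq (hker ▸ Submodule.fg_range d)

end Coherent

theorem injective_prod_mkQ {R M X Y : Type*} [Ring R] [AddCommGroup M] [Module R M]
    [AddCommGroup X] [Module R X] [AddCommGroup Y] [Module R Y] {C : Submodule R M}
    {f : M →ₗ[R] X} (hf : Injective (f ∘ₗ C.subtype)) {g : M ⧸ C →ₗ[R] Y} (hg : Injective g) :
    Injective (f.prod (g ∘ₗ C.mkQ)) := by
  refine (injective_iff_map_eq_zero _).2 fun x hx => ?_
  obtain ⟨hfx, hgx⟩ := Prod.mk.inj hx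
  have hxC : x ∈ C := (Submodule.Quotient.mk_eq_zero C).1 ((map_eq_zero_iff g hg).1 hgx)
  exact congrArg Subtype.val ((map_eq_zero_iff _ hf).1 hfx : (⟨x, hxC⟩ : C) = 0)

theorem cyclicModule_span_singleton {R M : Type u} [Ring R] [AddCommGroup M] [Module R M] (x : M) :
    CyclicModule R (Submodule.span R {x}) := by
  refine ⟨⟨x, Submodule.mem_span_singleton_self x⟩, ?_⟩
  rw [← Submodule.span_span_coe_preimage (R := R) (s := {x})]
  congr 1
  ext y
  simp [Subtype.ext_iff]

theorem EmbedsInFree.of_quotient {R : Type u} [Ring R] (hinj : FPInjective R R) {M : Type u}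
    [AddCommGroup M] [Module R M] [Module.Finite R M] (C : Submodule R M) [Module.Finite R C]
    (hquot : Module.FinitePresentation R (M ⧸ C)) (hC : EmbedsInFree R C)
    (hMC : EmbedsInFree R (M ⧸ C)) : EmbedsInFree R M := by
  obtain ⟨p, f, hf⟩ := embedsInFree_iff_exists_fin.1 hC
  obtain ⟨q, e, he⟩ := embedsInFree_iff_exists_fin.1 hMC
  obtain ⟨g, rfl⟩ := FPInjective.exists_comp_eq (FPInjective.pi fun _ : Fin p => hinj) C.subtype
    (by rwa [Submodule.range_subtype]) (f := f) (by simp)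
  let i := (LinearEquiv.sumArrowLequivProdArrow (Fin p) (Fin q) R R).symm
  exact .of_injective_pi (f := i.toLinearMap ∘ₗ g.prod (e ∘ₗ C.mkQ))
    (i.injective.comp (injective_prod_mkQ hf he))

theorem leftIF_of_cyclic {R : Type u} [Ring R] (hcoh : LeftCoherent R) (hinj : FPInjective R R)
    (hcyc : ∀ (M : Type u) [AddCommGroup M] [Module R M],
      Module.FinitePresentation R M → CyclicModule R M → EmbedsInFree R M) : LeftIF R := by
  suffices h : ∀ (n : ℕ) (M : Type u) [AddCommGroup M] [Module R M] (s : Fin n → M),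
      Module.FinitePresentation R M → Submodule.span R (Set.range s) = ⊤ →
      EmbedsInFree R M by
    intro M _ _ hM
    obtain ⟨n, s, hs⟩ := Module.Finite.exists_fin (R := R) (M := M)
    exact h n M s hM hs
  intro n
  induction n with
  | zero =>
    intro M _ _ s _ hs
    have : Subsingleton M := by simpa [subsingleton_iff_bot_eq_top] using hs
    exact ⟨PEmpty, 0, injective_of_subsingleton _⟩
  | succ n ih =>
    intro M _ _ s hM hs
    let C := Submodule.span R {s 0}
    have hCfg : C.FG := Submodule.fg_span_singleton (s 0)
    have hC : Module.FinitePresentation R C := hcoh.pseudoCoherent C hCfg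
    have hquot : Module.FinitePresentation R (M ⧸ C) :=
      Module.finitePresentation_of_surjective _ C.mkQ_surjective (by rwa [Submodule.ker_mkQ])
    have hspan : Submodule.span R (Set.range fun i : Fin n => C.mkQ (s i.succ)) = ⊤ := by
      have hs' : Submodule.span R (Set.range (C.mkQ ∘ s)) = ⊤ := by
        rw [Set.range_comp, ← Submodule.map_span, hs, Submodule.map_top, Submodule.range_mkQ]
      have hs0 : C.mkQ (s 0) = 0 :=
        (Submodule.Quotient.mk_eq_zero C).2 (Submodule.mem_span_singleton_self (s 0))
      rwa [Fin.range_fin_succ, comp_apply, hs0, Submodule.span_insert_zero] at hs'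
    exact .of_quotient hinj C hquot (hcyc C hC (cyclicModule_span_singleton _))
      (ih (M ⧸ C) _ hquot hspan)

section Op

variable {R : Type u} [Ring R]

theorem embedsInFree_op_iff {M : Type u} [AddCommGroup M] [Module Rᵐᵒᵖ M] :
    EmbedsInFree Rᵐᵒᵖ M ↔ EmbedsInFreeRight R M := by
  let e (ι : Type u) : (ι →₀ R) ≃ₗ[Rᵐᵒᵖ] ι →₀ Rᵐᵒᵖ :=
    Finsupp.mapRange.linearEquiv (opLinearEquiv Rᵐᵒᵖ)
  exact ⟨fun ⟨ι, f, hf⟩ => ⟨ι, (e ι).symm.toLinearMap ∘ₗ f, (e ι).symm.injective.comp hf⟩,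
    fun ⟨ι, f, hf⟩ => ⟨ι, (e ι).toLinearMap ∘ₗ f, (e ι).injective.comp hf⟩⟩

theorem leftIF_op_iff : LeftIF Rᵐᵒᵖ ↔ RightIF R :=
  ⟨fun h M _ _ hM => embedsInFree_op_iff.1 (h M hM),
    fun h M _ _ hM => embedsInFree_op_iff.2 (h M hM)⟩

theorem fpInjective_op_iff : FPInjective Rᵐᵒᵖ Rᵐᵒᵖ ↔ FPInjective Rᵐᵒᵖ R :=
  ⟨fun h => h.of_linearEquiv (opLinearEquiv Rᵐᵒᵖ).symm,
    fun h => h.of_linearEquiv (opLinearEquiv Rᵐᵒᵖ)⟩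

theorem leftCoherent_op_iff : LeftCoherent Rᵐᵒᵖ ↔ RightCoherent R :=
  ⟨fun h => PseudoCoherent.of_injective h (opLinearEquiv Rᵐᵒᵖ : R ≃ₗ[Rᵐᵒᵖ] Rᵐᵒᵖ).injective,
    fun h => PseudoCoherent.of_injective h (opLinearEquiv Rᵐᵒᵖ : R ≃ₗ[Rᵐᵒᵖ] Rᵐᵒᵖ).symm.injective⟩

end Op

section Matrix

open Matrix

/-- The rows of `F` generate the left module of solutions `x` of `x ᵥ* G = 0`. -/
def RowExact {R m n p : Type*} [Ring R] [Fintype m] [Fintype n] (F : Matrix m n R)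
    (G : Matrix n p R) : Prop :=
  Exact (fun x => x ᵥ* F) (fun x => x ᵥ* G)

/-- The columns of `G` generate the right module of solutions `x` of `F *ᵥ x = 0`. -/
def ColExact {R m n p : Type*} [Ring R] [Fintype n] [Fintype p] (F : Matrix m n R)
    (G : Matrix n p R) : Prop :=
  Exact (fun x => G *ᵥ x) (fun x => F *ᵥ x)

section Transpose

variable {R m n p : Type*}

theorem op_comp_eq_zero_iff [Zero R] {x : n → R} : op ∘ x = 0 ↔ x = 0 := by
  simp [funext_iff]

theorem map_op_transpose_surjective : Surjective fun F : Matrix m n R => Fᵀ.map op :=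
  fun F => ⟨(F.map unop)ᵀ, rfl⟩

variable [Ring R]

theorem op_dotProduct_op [Fintype n] (x y : n → R) : (op ∘ x) ⬝ᵥ (op ∘ y) = op (y ⬝ᵥ x) := by
  simp [dotProduct]

theorem op_vecMul_op [Fintype n] (x : n → R) (F : Matrix m n R) :
    (op ∘ x) ᵥ* Fᵀ.map op = op ∘ (F *ᵥ x) :=
  funext fun i => op_dotProduct_op x (F i)

theorem op_mulVec_op [Fintype m] (x : m → R) (F : Matrix m n R) :
    Fᵀ.map op *ᵥ (op ∘ x) = op ∘ (x ᵥ* F) :=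
  funext fun j => op_dotProduct_op (fun i => F i j) x

theorem rowExact_op_iff [Fintype n] [Fintype p] {F : Matrix m n R} {G : Matrix n p R} :
    RowExact (Gᵀ.map op) (Fᵀ.map op) ↔ ColExact F G := by
  simp_rw [RowExact, ColExact, Exact, op_surjective.comp_left.forall, Set.mem_range,
    op_surjective.comp_left.exists, op_vecMul_op, op_injective.comp_left.eq_iff,
    op_comp_eq_zero_iff]

theorem RowExact.mul_eq_zero [Fintype m] [Fintype n] {F : Matrix m n R} {G : Matrix n p R}
    (h : RowExact F G) : F * G = 0 := by
  classical
  ext i j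
  have hrow : F.row i ᵥ* G = 0 := by simpa using h.apply_apply_eq_zero (Pi.single i 1)
  exact congrFun hrow j

theorem ColExact.mul_eq_zero [Fintype n] [Fintype p] {F : Matrix m n R} {G : Matrix n p R}
    (h : ColExact F G) : F * G = 0 := by
  classical
  ext i j
  have hcol : F *ᵥ G.col j = 0 := by simpa using h.apply_apply_eq_zero (Pi.single j 1)
  exact congrFun hcol i

theorem linearCombination_bijective [Fintype n] {M : Type*} [AddCommGroup M] [Module R M] :
    Bijective (Fintype.linearCombination R : (n → M) → (n → R) →ₗ[R] M) := by
  classical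
  refine ⟨fun x y hxy => funext fun i => ?_, fun f => ⟨fun i => f (Pi.single i 1), ?_⟩⟩
  · simpa using LinearMap.congr_fun hxy (Pi.single i 1)
  · exact LinearMap.pi_ext' fun i => LinearMap.ext_ring (by simp)

end Transpose

variable {R : Type u} [Ring R]

theorem leftIF_iff_rowExact : LeftIF R ↔ ∀ (m n : ℕ) (F : Matrix (Fin m) (Fin n) R),
    ∃ (p : ℕ) (G : Matrix (Fin n) (Fin p) R), RowExact F G := by
  simp_rw [leftIF_iff_exact, toLinearMapRight'.surjective.forall,
    toLinearMapRight'.surjective.exists]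
  rfl

theorem leftCoherent_iff_rowExact : LeftCoherent R ↔ ∀ (n p : ℕ) (G : Matrix (Fin n) (Fin p) R),
    ∃ (m : ℕ) (F : Matrix (Fin m) (Fin n) R), RowExact F G := by
  simp_rw [leftCoherent_iff_exact, toLinearMapRight'.surjective.forall,
    toLinearMapRight'.surjective.exists]
  rfl

theorem rightIF_iff_colExact : RightIF R ↔ ∀ (p n : ℕ) (G : Matrix (Fin n) (Fin p) R),
    ∃ (m : ℕ) (F : Matrix (Fin m) (Fin n) R), ColExact F G := by
  simp_rw [← leftIF_op_iff, leftIF_iff_rowExact, map_op_transpose_surjective.forall,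
    map_op_transpose_surjective.exists, rowExact_op_iff]

theorem rightCoherent_iff_colExact :
    RightCoherent R ↔ ∀ (n m : ℕ) (F : Matrix (Fin m) (Fin n) R),
      ∃ (p : ℕ) (G : Matrix (Fin n) (Fin p) R), ColExact F G := by
  simp_rw [← leftCoherent_op_iff, leftCoherent_iff_rowExact, map_op_transpose_surjective.forall,
    map_op_transpose_surjective.exists, rowExact_op_iff]

theorem fpInjective_self_iff : FPInjective R R ↔ ∀ (m n : ℕ) (F : Matrix (Fin m) (Fin n) R)
    (φ : Fin m → R), (∀ x, x ᵥ* F = 0 → x ⬝ᵥ φ = 0) → ∃ ψ, F *ᵥ ψ = φ := by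
  simp_rw [fpInjective_iff, toLinearMapRight'.surjective.forall,
    linearCombination_bijective.surjective.forall, linearCombination_bijective.surjective.exists]
  refine forall₄_congr fun m n F φ => imp_congr Iff.rfl (exists_congr fun ψ => ?_)
  rw [← (linearCombination_bijective (R := R)).injective.eq_iff]
  refine Eq.congr_left (LinearMap.ext fun x => ?_)
  exact (dotProduct_mulVec x F ψ).symm

theorem fpInjective_op_self_iff : FPInjective Rᵐᵒᵖ R ↔
    ∀ (n m : ℕ) (F : Matrix (Fin m) (Fin n) R) (φ : Fin n → R),
      (∀ x, F *ᵥ x = 0 → φ ⬝ᵥ x = 0) → ∃ ψ, ψ ᵥ* F = φ := by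
  simp_rw [← fpInjective_op_iff, fpInjective_self_iff, map_op_transpose_surjective.forall,
    op_surjective.comp_left.forall, op_surjective.comp_left.exists, op_vecMul_op, op_mulVec_op,
    op_dotProduct_op, op_eq_zero_iff, op_injective.comp_left.eq_iff, op_comp_eq_zero_iff]

variable {k l q : ℕ} {F : Matrix (Fin k) (Fin l) R} {G : Matrix (Fin l) (Fin q) R}

theorem RowExact.colExact (h : RowExact F G) (hR : FPInjective R R) : ColExact F G := by
  refine fun v => ⟨fun hv => fpInjective_self_iff.1 hR _ _ G v fun x hx => ?_, ?_⟩
  · obtain ⟨y, rfl⟩ := (h x).1 hx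
    have hv : F *ᵥ v = 0 := hv
    rw [← dotProduct_mulVec, hv, dotProduct_zero]
  · rintro ⟨y, rfl⟩
    simp [mulVec_mulVec, h.mul_eq_zero]

theorem ColExact.rowExact (h : ColExact F G) (hR : FPInjective Rᵐᵒᵖ R) : RowExact F G := by
  refine fun v => ⟨fun hv => fpInjective_op_self_iff.1 hR _ _ F v fun x hx => ?_, ?_⟩
  · obtain ⟨y, rfl⟩ := (h x).1 hx
    have hv : v ᵥ* G = 0 := hv
    rw [dotProduct_mulVec, hv, zero_dotProduct]
  · rintro ⟨y, rfl⟩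
    simp [vecMul_vecMul, h.mul_eq_zero]

theorem LeftIF.fpInjective_op (h : LeftIF R) : FPInjective Rᵐᵒᵖ R := by
  refine fpInjective_op_self_iff.2 fun n m F φ hφ => ?_
  obtain ⟨p, G, hG⟩ := leftIF_iff_rowExact.1 h m n F
  refine (hG φ).1 (funext fun k => hφ (G.col k) ?_)
  exact funext fun i => congrFun₂ hG.mul_eq_zero i k

theorem RightIF.fpInjective (h : RightIF R) : FPInjective R R := by
  refine fpInjective_self_iff.2 fun m n F φ hφ => ?_
  obtain ⟨p, G, hG⟩ := rightIF_iff_colExact.1 h n m F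
  refine (hG φ).1 (funext fun k => hφ (G.row k) ?_)
  exact funext fun i => congrFun₂ hG.mul_eq_zero k i

theorem rightCoherent_iff_leftIF (hl : FPInjective R R) (hr : FPInjective Rᵐᵒᵖ R) :
    RightCoherent R ↔ LeftIF R := by
  rw [rightCoherent_iff_colExact, leftIF_iff_rowExact, forall_comm]
  exact forall₃_congr fun m n F => exists₂_congr fun p G =>
    ⟨fun h => h.rowExact hr, fun h => h.colExact hl⟩

theorem leftCoherent_iff_rightIF (hl : FPInjective R R) (hr : FPInjective Rᵐᵒᵖ R) :
    LeftCoherent R ↔ RightIF R := by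
  rw [leftCoherent_iff_rowExact, rightIF_iff_colExact, forall_comm]
  exact forall₃_congr fun p n G => exists₂_congr fun m F =>
    ⟨fun h => h.colExact hl, fun h => h.rowExact hr⟩

theorem wqf_iff_leftIF_and_rightIF : WQF R ↔ LeftIF R ∧ RightIF R := by
  constructor
  · rintro ⟨hlc, hrc, hl, hr⟩
    exact ⟨(rightCoherent_iff_leftIF hl hr).1 hrc, (leftCoherent_iff_rightIF hl hr).1 hlc⟩
  · rintro ⟨hL, hR⟩
    have hl := hR.fpInjective
    have hr := hL.fpInjective_op
    exact ⟨(leftCoherent_iff_rightIF hl hr).2 hR, (rightCoherent_iff_leftIF hl hr).2 hL, hl, hr⟩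

end Matrix

section Tensor

variable {R K K' M M' : Type u} [Ring R] [AddCommGroup K] [Module Rᵐᵒᵖ K] [AddCommGroup K']
  [Module Rᵐᵒᵖ K'] [AddCommGroup M] [Module R M] [AddCommGroup M'] [Module R M']
  {A : Type*} [AddCommGroup A]

/-- The `R`-balanced biadditive maps on `K × M`, that is, those factoring through `K ⊗_R M`. -/
def IsBalanced (R : Type*) {K M A : Type*} [Ring R] [AddCommGroup K] [Module Rᵐᵒᵖ K]
    [AddCommGroup M] [Module R M] [AddCommGroup A] (b : K →+ M →+ A) : Prop :=
  ∀ (r : R) (k : K) (m : M), b (op r • k) m = b k (r • m)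

namespace NCTensor

variable (R) in
/-- The universal balanced map `(k, m) ↦ k ⊗ m`. -/
def mk : K →+ M →+ NCTensor R K M :=
  AddMonoidHom.mk' (fun k => AddMonoidHom.mk' (fun m => QuotientAddGroup.mk (.of (k, m)))
    fun m₁ m₂ => QuotientAddGroup.eq_iff_sub_mem.2 <| AddSubgroup.subset_closure <|
      .inl <| .inr ⟨k, m₁, m₂, sub_add_eq_sub_sub _ _ _⟩)
    fun k₁ k₂ => AddMonoidHom.ext fun m => QuotientAddGroup.eq_iff_sub_mem.2 <|
      AddSubgroup.subset_closure <| .inl <| .inl ⟨k₁, k₂, m, sub_add_eq_sub_sub _ _ _⟩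

theorem isBalanced_mk : IsBalanced R (mk R : K →+ M →+ NCTensor R K M) := fun r k m =>
  QuotientAddGroup.eq_iff_sub_mem.2 <| AddSubgroup.subset_closure <| .inr ⟨r, k, m, rfl⟩

/-- The homomorphism `K ⊗_R M → A` with `k ⊗ m ↦ b k m`. -/
def lift (b : K →+ M →+ A) (hb : IsBalanced R b) : NCTensor R K M →+ A :=
  QuotientAddGroup.lift _ (FreeAbelianGroup.lift fun p : K × M => b p.1 p.2) <| by
    refine (AddSubgroup.closure_le _).2 ?_
    rintro x ((⟨k₁, k₂, m, rfl⟩ | ⟨k, m₁, m₂, rfl⟩) | ⟨r, k, m, rfl⟩)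
    · simp
    · simp
    · simpa [sub_eq_zero] using hb r k m

theorem lift_mk (b : K →+ M →+ A) (hb : IsBalanced R b) (k : K) (m : M) :
    lift b hb (mk R k m) = b k m :=
  FreeAbelianGroup.lift_apply_of (fun p : K × M => b p.1 p.2) (k, m)

theorem hom_ext {f g : NCTensor R K M →+ A} (h : ∀ k m, f (mk R k m) = g (mk R k m)) : f = g :=
  QuotientAddGroup.addMonoidHom_ext _ <| FreeAbelianGroup.lift_ext _ _ fun p => h p.1 p.2

end NCTensor

theorem tensorCongr_injective_iff (μ : K →ₗ[Rᵐᵒᵖ] K') (ν : M →ₗ[R] M') :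
    Injective (tensorCongr R μ ν) ↔ ∀ b : K →+ M →+ AddCircle (1 : ℚ), IsBalanced R b →
      ∃ b' : K' →+ M' →+ AddCircle (1 : ℚ), IsBalanced R b' ∧ ∀ k m, b' (μ k) (ν m) = b k m := by
  constructor
  · intro h b hb
    obtain ⟨c, hc⟩ := CharacterModule.dual_surjective_of_injective
      (tensorCongr R μ ν).toIntLinearMap h (NCTensor.lift b hb)
    refine ⟨(NCTensor.mk R).compr₂ c, fun r k m => congrArg c (NCTensor.isBalanced_mk r k m),
      fun k m => ?_⟩
    rw [← NCTensor.lift_mk b hb, ← hc]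
    rfl
  · intro h
    refine (injective_iff_map_eq_zero _).2 fun x hx => ?_
    refine CharacterModule.eq_zero_of_character_apply fun c => ?_
    obtain ⟨b, hb, hbc⟩ := h ((NCTensor.mk R).compr₂ c)
      fun r k m => congrArg c (NCTensor.isBalanced_mk r k m)
    have hc : c = (NCTensor.lift b hb).comp (tensorCongr R μ ν) :=
      NCTensor.hom_ext fun k m => ((NCTensor.lift_mk b hb _ _).trans (hbc k m)).symm
    rw [hc]
    exact (congrArg (NCTensor.lift b hb) hx).trans (map_zero _)

end Tensor

section CharacterModule

section Op

variable {R M : Type*} [Ring R] [AddCommGroup M] [Module R M]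

/-- The character module of a left `R`-module as a right `R`-module: `(c • r) m = c (r • m)`.
Mathlib's module structure needs `R` to be commutative. -/
instance characterModuleOp : Module Rᵐᵒᵖ (CharacterModule M) :=
  inferInstanceAs (Module Rᵈᵐᵃ (M →+ AddCircle (1 : ℚ)))

end Op

variable {R M : Type u} [Ring R] [AddCommGroup M] [Module R M]

theorem modFlat_iff_extends :
    ModFlat R M ↔ ∀ (K L : Type u) [AddCommGroup K] [Module Rᵐᵒᵖ K] [AddCommGroup L]
      [Module Rᵐᵒᵖ L] (μ : K →ₗ[Rᵐᵒᵖ] L), Injective μ →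
      ∀ b : K →+ M →+ AddCircle (1 : ℚ), IsBalanced R b →
        ∃ b' : L →+ M →+ AddCircle (1 : ℚ), IsBalanced R b' ∧ ∀ k m, b' (μ k) m = b k m := by
  simp_rw [ModFlat, tensorCongr_injective_iff, LinearMap.id_apply]

theorem modFlat_iff_injective : ModFlat R M ↔ Module.Injective Rᵐᵒᵖ (CharacterModule M) := by
  rw [modFlat_iff_extends]
  constructor
  · refine fun h => ⟨fun K L _ _ _ _ μ hμ g => ?_⟩
    obtain ⟨b, hb, hbg⟩ := h K L μ hμ g.toAddMonoidHom fun r k m =>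
      DFunLike.congr_fun (map_smul g (op r) k) m
    exact ⟨{ b with map_smul' := fun r k => CharacterModule.ext M fun m => hb r.unop k m },
      fun k => CharacterModule.ext M (hbg k)⟩
  · intro h K L _ _ _ _ μ hμ b hb
    obtain ⟨g, hg⟩ := h.out μ hμ
      { b with map_smul' := fun r k => CharacterModule.ext M fun m => hb r.unop k m }
    exact ⟨g.toAddMonoidHom, fun r k m => DFunLike.congr_fun (map_smul g (op r) k) m,
      fun k m => DFunLike.congr_fun (hg k) m⟩

theorem modFlat_op_iff {M : Type u} [AddCommGroup M] [Module Rᵐᵒᵖ M] :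
    ModFlat Rᵐᵒᵖ M ↔ ModFlatRight R M := by
  simp_rw [modFlat_iff_extends, ModFlatRight, tensorCongr_injective_iff, LinearMap.id_apply]
  constructor
  · intro h K L _ _ _ _ μ hμ b hb
    let _ : Module Rᵐᵒᵖᵐᵒᵖ K := Module.compHom K (RingEquiv.opOp R).symm.toRingHom
    let _ : Module Rᵐᵒᵖᵐᵒᵖ L := Module.compHom L (RingEquiv.opOp R).symm.toRingHom
    obtain ⟨b', hb', hbb'⟩ := h K L { μ with map_smul' := fun r => map_smul μ (unop (unop r)) } hμ
      b.flip fun r k m => (hb r.unop m k).symm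
    exact ⟨b'.flip, fun r m k => (hb' (op r) k m).symm, fun m k => hbb' k m⟩
  · intro h K L _ _ _ _ μ hμ b hb
    let _ : Module R K := Module.compHom K (RingEquiv.opOp R).toRingHom
    let _ : Module R L := Module.compHom L (RingEquiv.opOp R).toRingHom
    obtain ⟨b', hb', hbb'⟩ := h K L { μ with map_smul' := fun r => map_smul μ (op (op r)) } hμ
      b.flip fun r m k => (hb (op r) k m).symm
    exact ⟨b'.flip, fun r k m => (hb' r.unop m k).symm, fun k m => hbb' m k⟩

end CharacterModule

section EquationallyFlat

/-- The equational criterion for flatness: every relation `f ∘ d = 0` that holds in `M` between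
finite free modules comes from a relation `e ∘ d = 0` that holds in a finite free module. -/
def EquationallyFlat (R M : Type*) [Ring R] [AddCommGroup M] [Module R M] : Prop :=
  ∀ (m n : ℕ) (d : (Fin m → R) →ₗ[R] Fin n → R) (f : (Fin n → R) →ₗ[R] M), f ∘ₗ d = 0 →
    ∃ (p : ℕ) (e : (Fin n → R) →ₗ[R] Fin p → R) (h : (Fin p → R) →ₗ[R] M),
      e ∘ₗ d = 0 ∧ h ∘ₗ e = f

variable {R M : Type u} [Ring R] [AddCommGroup M] [Module R M]

theorem LeftIF.equationallyFlat (hR : LeftIF R) (hM : FPInjective R M) :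
    EquationallyFlat R M := by
  intro m n d f hfd
  obtain ⟨p, e, hde⟩ := leftIF_iff_exact.1 hR m n d
  obtain ⟨h, hh⟩ := fpInjective_iff.1 hM n p e f
    (hde.linearMap_ker_eq.trans_le (LinearMap.range_le_ker_iff.2 hfd))
  exact ⟨p, e, h, hde.linearMap_comp_eq_zero, hh⟩

theorem exists_injective_embedding (R : Type u) [Ring R] (M : Type u) [AddCommGroup M]
    [Module R M] : ∃ (E : Type u) (_ : AddCommGroup E) (_ : Module R E) (j : M →ₗ[R] E),
      Module.Injective R E ∧ Injective j := by
  have hE := CategoryTheory.Injective.injective_under (ModuleCat.of R M)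
  exact ⟨(CategoryTheory.Injective.under (ModuleCat.of R M) : ModuleCat R), inferInstance,
    inferInstance, (CategoryTheory.Injective.ι (ModuleCat.of R M)).hom,
    Module.injective_module_of_injective_object (inj := hE) R _,
    (ModuleCat.mono_iff_injective _).1 inferInstance⟩

theorem leftIF_of_equationallyFlat (h : ∀ (M : Type u) [AddCommGroup M] [Module R M],
    Module.Injective R M → EquationallyFlat R M) : LeftIF R := by
  refine leftIF_iff_exact.2 fun m n d => ?_
  obtain ⟨E, _, _, j, hE, hj⟩ := exists_injective_embedding R ((Fin n → R) ⧸ LinearMap.range d)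
  let π := (LinearMap.range d).mkQ
  have hker : LinearMap.ker (j ∘ₗ π) = LinearMap.range d := by
    rw [LinearMap.ker_comp_of_ker_eq_bot _ (LinearMap.ker_eq_bot.2 hj), Submodule.ker_mkQ]
  obtain ⟨p, e, k, hed, hke⟩ := h E hE m n d (j ∘ₗ π) (LinearMap.range_le_ker_iff.1 hker.ge)
  refine ⟨p, e, LinearMap.exact_iff.2 (le_antisymm ?_ (LinearMap.range_le_ker_iff.2 hed))⟩
  calc LinearMap.ker e ≤ LinearMap.ker (k ∘ₗ e) := LinearMap.ker_le_ker_comp e k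
    _ = LinearMap.range d := by rw [hke, hker]

end EquationallyFlat

section SmulRight

variable {R X M : Type*} [Ring R] [AddCommGroup X] [Module R X] [AddCommGroup M] [Module R M]
  {n : ℕ}

theorem comp_eq_sum_smulRight (h : (Fin n → R) →ₗ[R] M) (e : X →ₗ[R] Fin n → R) :
    h ∘ₗ e = ∑ i, (LinearMap.proj i ∘ₗ e).smulRight (h (Pi.single i 1)) := by
  ext x
  conv_lhs => rw [LinearMap.comp_apply, pi_eq_sum_univ' (e x), map_sum]
  simp

theorem exists_comp_eq_of_mem_span_smulRight {S : Set (X →ₗ[R] R)} {f : X →ₗ[R] M}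
    (hf : f ∈ Submodule.span ℤ (Set.image2 LinearMap.smulRight S Set.univ)) :
    ∃ (p : ℕ) (e : X →ₗ[R] Fin p → R) (h : (Fin p → R) →ₗ[R] M),
      (∀ i, LinearMap.proj i ∘ₗ e ∈ S) ∧ h ∘ₗ e = f := by
  obtain ⟨p, a, g, rfl⟩ := Submodule.mem_span_set'.1 hf
  choose e he x _ hx using fun i => (g i).2
  refine ⟨p, LinearMap.pi e, Fintype.linearCombination R fun i => a i • x i, he, ?_⟩
  ext y
  simp only [← hx, LinearMap.comp_apply, Fintype.linearCombination_apply, LinearMap.pi_apply,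
    LinearMap.sum_apply, LinearMap.smul_apply, LinearMap.smulRight_apply]
  exact Finset.sum_congr rfl fun i _ => smul_comm _ _ _

/-- The dual of the canonical map `Hom(X, R) ⊗ M → Hom(X, M)` taking `e ⊗ x` to `e(·) x`, with the
dual of the tensor product written as `Hom(Hom(X, R), M⁺)`, where `M⁺` is the character module. -/
def smulRightDual (c : CharacterModule (X →ₗ[R] M)) :
    (X →ₗ[R] R) →ₗ[Rᵐᵒᵖ] CharacterModule M where
  toFun e := AddMonoidHom.mk' (fun x => c (e.smulRight x)) fun x y => by
    rw [← map_add]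
    exact congrArg c (LinearMap.ext fun z => smul_add _ _ _)
  map_add' e e' := CharacterModule.ext _ fun x => by
    refine Eq.trans ?_ (map_add c _ _)
    exact congrArg c (LinearMap.ext fun z => add_smul _ _ _)
  map_smul' r e := CharacterModule.ext _ fun x =>
    congrArg c (LinearMap.ext fun z => mul_smul _ _ _)

theorem smulRightDual_bijective :
    Bijective (smulRightDual : CharacterModule ((Fin n → R) →ₗ[R] M) → _) := by
  constructor
  · refine fun c c' h => CharacterModule.ext _ fun f => ?_
    rw [← LinearMap.comp_id f, comp_eq_sum_smulRight, map_sum, map_sum]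
    exact Finset.sum_congr rfl fun i _ => DFunLike.congr_fun (LinearMap.congr_fun h _) _
  · intro D
    refine ⟨AddMonoidHom.mk' (fun g => ∑ i, D (LinearMap.proj i) (g (Pi.single i 1)))
      fun g g' => by simp [Finset.sum_add_distrib], LinearMap.ext fun e => CharacterModule.ext _
        fun x => ?_⟩
    let ev : CharacterModule M →+ AddCircle (1 : ℚ) := AddMonoidHom.eval x
    have he : e = ∑ i, op (e (Pi.single i 1)) • LinearMap.proj i := comp_eq_sum_smulRight e .id
    calc ∑ i, D (LinearMap.proj i) (e (Pi.single i 1) • x)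
        = ∑ i, ev (D (op (e (Pi.single i 1)) • LinearMap.proj i)) := by simp only [map_smul]; rfl
      _ = ev (D (∑ i, op (e (Pi.single i 1)) • LinearMap.proj i)) := by simp only [map_sum]
      _ = D e x := by rw [← he]; rfl

end SmulRight

theorem exists_character_of_notMem {A : Type*} [AddCommGroup A] {S : Submodule ℤ A} {f : A}
    (hf : f ∉ S) : ∃ c : CharacterModule A, (∀ g ∈ S, c g = 0) ∧ c f ≠ 0 := by
  obtain ⟨c, hc⟩ := CharacterModule.exists_character_apply_ne_zero_of_ne_zero
    (mt (Submodule.Quotient.mk_eq_zero S).1 hf)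
  refine ⟨c.comp S.mkQ.toAddMonoidHom, fun g hg => ?_, hc⟩
  exact (congrArg c ((Submodule.Quotient.mk_eq_zero S).2 hg)).trans (map_zero c)

section EquationalCriterion

variable {R M : Type u} [Ring R] [AddCommGroup M] [Module R M]

theorem equationallyFlat_of_baer (h : Module.Baer Rᵐᵒᵖ (CharacterModule M)) :
    EquationallyFlat R M := by
  intro m n d f hfd
  let d' : ((Fin n → R) →ₗ[R] R) →ₗ[Rᵐᵒᵖ] (Fin m → R) →ₗ[R] R := LinearMap.lcomp Rᵐᵒᵖ R d
  suffices hf : f ∈ Submodule.span ℤ (Set.image2 LinearMap.smulRight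
      (LinearMap.ker d' : Set ((Fin n → R) →ₗ[R] R)) Set.univ) by
    obtain ⟨p, e, k, hed, hke⟩ := exists_comp_eq_of_mem_span_smulRight hf
    exact ⟨p, e, k, LinearMap.ext fun x => funext fun i => LinearMap.congr_fun (hed i) x, hke⟩
  by_contra hf
  obtain ⟨c, hcS, hcf⟩ := exists_character_of_notMem hf
  obtain ⟨D, hD⟩ := exists_comp_eq_of_baer h d' (f := smulRightDual c) fun e he =>
    CharacterModule.ext _ fun x => hcS _ (Submodule.subset_span ⟨e, he, x, trivial, rfl⟩)
  obtain ⟨c', rfl⟩ := smulRightDual_bijective.surjective D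
  have hcc' : c = c'.comp (LinearMap.lcomp ℤ M d).toAddMonoidHom :=
    smulRightDual_bijective.injective hD.symm
  refine hcf ?_
  rw [hcc']
  exact (congrArg c' hfd).trans (map_zero c')

theorem op_apply_unop_mem {I : Ideal Rᵐᵒᵖ} {n : ℕ} (a : Fin n → I) (e : (Fin n → R) →ₗ[R] R) :
    op (e fun i => unop (a i : Rᵐᵒᵖ)) ∈ I := by
  rw [e.pi_apply_eq_sum_univ, Finset.op_sum]
  exact Submodule.sum_mem _ fun i _ => I.smul_mem _ (a i).2

theorem exists_character_smulRight_eq {I : Ideal Rᵐᵒᵖ} (g : I →ₗ[Rᵐᵒᵖ] CharacterModule M) {n : ℕ}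
    (a : Fin n → I) : ∃ c : CharacterModule ((Fin n → R) →ₗ[R] M),
      ∀ e x, c (e.smulRight x) = g ⟨_, op_apply_unop_mem a e⟩ x := by
  let ev : ((Fin n → R) →ₗ[R] R) →ₗ[Rᵐᵒᵖ] Rᵐᵒᵖ :=
    (opLinearEquiv Rᵐᵒᵖ).toLinearMap ∘ₗ dualEval R _ fun i => unop (a i : Rᵐᵒᵖ)
  obtain ⟨c, hc⟩ := smulRightDual_bijective.surjective
    (g ∘ₗ ev.codRestrict I (op_apply_unop_mem a))
  exact ⟨c, fun e x => DFunLike.congr_fun (LinearMap.congr_fun hc e) x⟩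

theorem EquationallyFlat.sum_apply_eq_zero (hM : EquationallyFlat R M) {I : Ideal Rᵐᵒᵖ}
    (g : I →ₗ[Rᵐᵒᵖ] CharacterModule M) {n : ℕ} {a : Fin n → I} {x : Fin n → M}
    (h : ∑ i, unop (a i : Rᵐᵒᵖ) • x i = 0) : ∑ i, g (a i) (x i) = 0 := by
  let a' : Fin n → R := fun i => unop (a i : Rᵐᵒᵖ)
  let d : (Fin 1 → R) →ₗ[R] Fin n → R := LinearMap.toSpanSingleton R _ a' ∘ₗ LinearMap.proj 0
  let f := Fintype.linearCombination R x
  obtain ⟨p, e, k, hed, hke⟩ := hM 1 n d f <| LinearMap.ext fun r => by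
    simp [f, d, a', Fintype.linearCombination_apply, h]
  have hea : e a' = 0 := by simpa [d] using LinearMap.congr_fun hed 1
  obtain ⟨c, hc⟩ := exists_character_smulRight_eq g a
  have hce (j y) : c ((LinearMap.proj j ∘ₗ e).smulRight y) = 0 := by
    have hj : (⟨_, op_apply_unop_mem a (LinearMap.proj j ∘ₗ e)⟩ : I) = 0 :=
      Subtype.ext (congrArg op (congrFun hea j))
    rw [hc, hj, map_zero]
    rfl
  calc ∑ i, g (a i) (x i) = ∑ i, c ((LinearMap.proj i).smulRight (x i)) := by simp only [hc]; rfl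
    _ = c (k ∘ₗ e) := by
      rw [hke, ← LinearMap.comp_id f, comp_eq_sum_smulRight, map_sum]
      simp [f]
    _ = 0 := by
      rw [comp_eq_sum_smulRight, map_sum]
      exact Finset.sum_eq_zero fun j _ => hce j _

theorem EquationallyFlat.baer_characterModule (hM : EquationallyFlat R M) :
    Module.Baer Rᵐᵒᵖ (CharacterModule M) := by
  intro I g
  let μ : I →+ M →+ M :=
    (smulAddHom R M).comp (opAddEquiv.symm.toAddMonoidHom.comp I.subtype.toAddMonoidHom)
  let T : TensorProduct ℤ I M →+ M := TensorProduct.liftAddHom μ fun r a x =>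
    (DFunLike.congr_fun (map_zsmul μ r a) x).trans (map_zsmul (μ a) r x).symm
  let G : TensorProduct ℤ I M →+ AddCircle (1 : ℚ) :=
    TensorProduct.liftAddHom g.toAddMonoidHom fun r a x =>
      (DFunLike.congr_fun (map_zsmul g r a) x).trans (map_zsmul (g a) r x).symm
  obtain ⟨c, hc⟩ := exists_comp_eq_of_baer (Module.Baer.of_divisible (AddCircle (1 : ℚ)))
    T.toIntLinearMap (f := G.toIntLinearMap) fun z hz => by
      obtain ⟨n, a, x, rfl⟩ := TensorProduct.exists_sum_tmul_eq z
      refine (map_sum G _ _).trans (hM.sum_apply_eq_zero g ?_)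
      exact (map_sum T _ _).symm.trans hz
  refine ⟨LinearMap.toSpanSingleton Rᵐᵒᵖ (CharacterModule M) c.toAddMonoidHom, fun r hr =>
    CharacterModule.ext _ fun x => ?_⟩
  exact LinearMap.congr_fun hc (TensorProduct.tmul ℤ ⟨r, hr⟩ x)

theorem modFlat_iff_equationallyFlat : ModFlat R M ↔ EquationallyFlat R M := by
  rw [modFlat_iff_injective, ← Module.Baer.iff_injective]
  exact ⟨equationallyFlat_of_baer, EquationallyFlat.baer_characterModule⟩

end EquationalCriterion

theorem leftIF_tfae (R : Type u) [Ring R] : List.TFAE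
    [LeftIF R,
      ∀ (M : Type u) [AddCommGroup M] [Module R M], FPInjective R M → ModFlat R M,
      ∀ (M : Type u) [AddCommGroup M] [Module R M], Module.Injective R M → ModFlat R M] := by
  simp_rw [modFlat_iff_equationallyFlat]
  tfae_have 1 → 2 := fun h M _ _ => h.equationallyFlat
  tfae_have 2 → 3 := fun h M _ _ hM => h M (.of_injective hM)
  tfae_have 3 → 1 := leftIF_of_equationallyFlat
  tfae_finish

theorem rightIF_tfae (R : Type u) [Ring R] : List.TFAE
    [RightIF R,
      ∀ (M : Type u) [AddCommGroup M] [Module Rᵐᵒᵖ M], FPInjective Rᵐᵒᵖ M → ModFlatRight R M,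
      ∀ (M : Type u) [AddCommGroup M] [Module Rᵐᵒᵖ M],
        Module.Injective Rᵐᵒᵖ M → ModFlatRight R M] := by
  simpa only [leftIF_op_iff, modFlat_op_iff] using leftIF_tfae Rᵐᵒᵖ

/-- Theorem 2.8: characterizations of weakly quasi-Frobenius rings. -/
theorem stmt_9 (R : Type u) [Ring R] :
    List.TFAE
      [WQF R,
       LeftIF R ∧ RightIF R,
       LeftCoherent R ∧ FPInjective R R ∧
         (∀ (M : Type u) [AddCommGroup M] [Module R M],
           Module.FinitePresentation R M → CyclicModule R M → EmbedsInFree R M),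
       (∀ (M : Type u) [AddCommGroup M] [Module R M], FPInjective R M → ModFlat R M) ∧
         (∀ (M : Type u) [AddCommGroup M] [Module Rᵐᵒᵖ M], FPInjective Rᵐᵒᵖ M →
           ModFlatRight R M),
       (∀ (M : Type u) [AddCommGroup M] [Module R M], Module.Injective R M → ModFlat R M) ∧
         (∀ (M : Type u) [AddCommGroup M] [Module Rᵐᵒᵖ M], Module.Injective Rᵐᵒᵖ M →
           ModFlatRight R M)] := by
  have hleft := leftIF_tfae R
  have hright := rightIF_tfae R
  tfae_have 1 ↔ 2 := wqf_iff_leftIF_and_rightIF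
  tfae_have 2 ↔ 4 := and_congr (hleft.out 0 1) (hright.out 0 1)
  tfae_have 2 ↔ 5 := and_congr (hleft.out 0 2) (hright.out 0 2)
  tfae_have 1 → 3
  | ⟨hcoh, hcoh', hinj, hinj'⟩ =>
    ⟨hcoh, hinj, fun M _ _ hM _ => (rightCoherent_iff_leftIF hinj hinj').1 hcoh' M hM⟩
  tfae_have 3 → 1
  | ⟨hcoh, hinj, hcyc⟩ => by
    have hIF : LeftIF R := leftIF_of_cyclic hcoh hinj hcyc
    have hinj' : FPInjective Rᵐᵒᵖ R := hIF.fpInjective_op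
    exact ⟨hcoh, (rightCoherent_iff_leftIF hinj hinj').2 hIF, hinj, hinj'⟩
  tfae_finish
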